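/- Let G be a finite oriented multigraph with a total order on E(G), A a finite abelian group, and b : V(G) → A locally zero-sum. Then the signless coefficients a_i(G,b) (the number of i-edge subsets S with G−S b-compatible and S containing no b-compatible broken bond) do not depend on the choice of the total order on E(G). -/

import Mathlib

open Finset

attribute [local instance] Classical.propDecidable

universe u v w

/-- Adjacency through a present edge in the spanning subgraph with edge predicate `ok`. -/
def edgeRel {V E : Type*} (head tail : E → V) (ok : E → Prop) (u v : V) : Prop :=
  ∃ e, ok e ∧ ((head e = u ∧ tail e = v) ∨ (head e = v ∧ tail e = u))

/-- Reachability (same connected component) in the spanning subgraph. -/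
def Reach {V E : Type*} (head tail : E → V) (ok : E → Prop) : V → V → Prop :=
  Relation.EqvGen (edgeRel head tail ok)

/-- Number of connected components of the spanning subgraph. -/
noncomputable def ncomp {V E : Type*} (head tail : E → V) (ok : E → Prop) : ℕ :=
  Nat.card (Quotient (Relation.EqvGen.setoid (edgeRel head tail ok)))

/-- Boundary of an edge-valued function, via the orientation `head`/`tail`. -/
noncomputable def bdry {V E A : Type*} [Fintype E] [AddCommGroup A]
    (head tail : E → V) (f : E → A) (v : V) : A :=
  ∑ e : E, ((if head e = v then f e else 0) - (if tail e = v then f e else 0))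

/-- Boundary of an edge-valued function on the spanning subgraph with edges `ok`. -/
noncomputable def bdrySub {V E A : Type*} [Fintype E] [AddCommGroup A]
    (head tail : E → V) (ok : E → Prop) (f : {e : E // ok e} → A) (v : V) : A :=
  ∑ e : {e : E // ok e}, ((if head e.1 = v then f e else 0) - (if tail e.1 = v then f e else 0))

/-- `b` sums to zero over every connected component of the spanning subgraph
(`b`-compatibility / locally zero-sum). -/
def Compatible {V E A : Type*} [Fintype V] [AddCommGroup A]
    (head tail : E → V) (ok : E → Prop) (b : V → A) : Prop :=
  ∀ v : V, (∑ u : V, if Reach head tail ok u v then b u else 0) = 0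

/-- A bond: a minimal nonempty edge set whose deletion changes the number of components,
equivalently a minimal nonempty edge cut. -/
def IsBond {V E : Type*} (head tail : E → V) (F : Finset E) : Prop :=
  F.Nonempty ∧ ncomp head tail (fun e => e ∉ F) ≠ ncomp head tail (fun _ => True) ∧
    ∀ F' : Finset E, F' ⊂ F → ncomp head tail (fun e => e ∉ F') = ncomp head tail (fun _ => True)

/-- Cycle rank `m(G-S) = |E(G-S)| - |V| + c(G-S)` of the spanning subgraph `G-S`. -/
noncomputable def cycRank {V E : Type*} [Fintype V] [Fintype E]
    (head tail : E → V) (S : Finset E) : ℕ :=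
  (Fintype.card E - S.card) + ncomp head tail (fun e => e ∉ S) - Fintype.card V

/-- A `b`-compatible bond. -/
def IsCBond {V E A : Type*} [Fintype V] [AddCommGroup A]
    (head tail : E → V) (b : V → A) (F : Finset E) : Prop :=
  IsBond head tail F ∧ Compatible head tail (fun e => e ∉ F) b

/-- A `b`-compatible broken bond w.r.t. the total order `lo` on edges. -/
def IsCBrokenBond {V E A : Type*} [Fintype V] [AddCommGroup A]
    (head tail : E → V) (lo : LinearOrder E) (b : V → A) (B : Finset E) : Prop :=
  ∃ F : Finset E, IsCBond head tail b F ∧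
    ∃ hne : F.Nonempty, B = F.erase (@Finset.max' E lo F hne)

/-- The signless coefficient `a_i(G,b)`: the number of `i`-edge subsets `S` with `G-S`
`b`-compatible and `S` containing no `b`-compatible broken bond. -/
noncomputable def aCoeff {V E A : Type*} [Fintype V] [Fintype E] [AddCommGroup A]
    (head tail : E → V) (lo : LinearOrder E) (b : V → A) (i : ℕ) : ℕ :=
  Nat.card {S : Finset E // S.card = i ∧ Compatible head tail (fun e => e ∉ S) b ∧
    ∀ B : Finset E, IsCBrokenBond head tail lo b B → ¬ B ⊆ S}

/-- Adjacency inside the induced subgraph on the vertex set `X`. -/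
def edgeRelIn {V E : Type*} (head tail : E → V) (X : Set V) (u v : V) : Prop :=
  ∃ e, head e ∈ X ∧ tail e ∈ X ∧ ((head e = u ∧ tail e = v) ∨ (head e = v ∧ tail e = u))

/-- Reachability within the induced subgraph on `X`. -/
def ReachIn {V E : Type*} (head tail : E → V) (X : Set V) : V → V → Prop :=
  Relation.EqvGen (edgeRelIn head tail X)

def setoidOn {V E : Type*} (head tail : E → V) (X : Set V) : Setoid {v : V // v ∈ X} :=
  ⟨fun a b => ReachIn head tail X a.1 b.1,
   ⟨fun a => Relation.EqvGen.refl a.1, fun h => Relation.EqvGen.symm _ _ h, fun h h' => Relation.EqvGen.trans _ _ _ h h'⟩⟩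

/-- Number of connected components of the induced subgraph on `X`. -/
noncomputable def ncompOn {V E : Type*} (head tail : E → V) (X : Set V) : ℕ :=
  Nat.card (Quotient (setoidOn head tail X))

/-- `X ∈ Λ(G)`: `X` nonempty, `G[X]` connected and `c(G-X) = c(G)`. -/
def InLambda {V E : Type*} [Fintype V] (head tail : E → V) (X : Finset V) : Prop :=
  X.Nonempty ∧ (∀ u ∈ X, ∀ v ∈ X, ReachIn head tail (↑X) u v) ∧
    ncompOn head tail ((↑X : Set V)ᶜ) = ncomp head tail (fun _ => True)

/- The sum of `(-1) ^ |S|` over the edge sets `S` that have rank `i` in the bond matroid and for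
which `G - S` is `b`-compatible makes no reference to the edge order, and it equals
`(-1) ^ i * a_i(G, b)` for every order. Indeed, call `e` active for `S` if it is the largest edge of
a `b`-compatible bond all of whose other edges lie in `S`. Toggling an active edge changes neither
the rank of `S` nor the compatibility of `G - S`, and toggling the least one keeps it the least
active edge, so the sets with an active edge cancel in pairs. If `G - S` is `b`-compatible and `S`
has no active edge, then `S` contains no bond and hence has rank `|S|`. -/

section Toggle

open scoped symmDiff

variable {α : Type*} [DecidableEq α] {S : Finset α} {e : α}

theorem symmDiff_singleton_of_notMem (he : e ∉ S) : S ∆ {e} = insert e S := by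
  grind [mem_symmDiff]

theorem symmDiff_singleton_of_mem (he : e ∈ S) : S ∆ {e} = S.erase e := by
  grind [mem_symmDiff]

theorem neg_one_pow_card_add_symmDiff_singleton (S : Finset α) (e : α) :
    (-1 : ℤ) ^ #S + (-1) ^ #(S ∆ {e}) = 0 := by
  by_cases he : e ∈ S
  · rw [symmDiff_singleton_of_mem he, ← card_erase_add_one he]
    ring
  · rw [symmDiff_singleton_of_notMem he, card_insert_of_notMem he]
    ring

end Toggle

section Active

open scoped symmDiff

variable {α : Type*} [LinearOrder α] {𝒞 : Set (Finset α)} {S : Finset α} {e e' : α}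

/-- The element `e` is active for `S` with respect to a family `𝒞` of circuits if it is the largest
element of a circuit whose other elements, which form a broken circuit, all lie in `S`. Unlike in
the usual external activity, `e` itself may belong to `S`. -/
def IsActive (𝒞 : Set (Finset α)) (S : Finset α) (e : α) : Prop :=
  ∃ C ∈ 𝒞, IsGreatest (C : Set α) e ∧ C.erase e ⊆ S

theorem isActive_symmDiff_singleton_iff (h : e' ≤ e) :
    IsActive 𝒞 (S ∆ {e}) e' ↔ IsActive 𝒞 S e' := by
  refine exists_congr fun C ↦ and_congr_right fun _ ↦ and_congr_right fun hC ↦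
    forall₂_congr fun x hx ↦ ?_
  have hxe : x ≠ e := by
    rintro rfl
    exact (mem_erase.1 hx).1 (le_antisymm (hC.2 (mem_erase.1 hx).2) h)
  simp [mem_symmDiff, hxe]

theorem isLeast_isActive_symmDiff_singleton (h : IsLeast {x | IsActive 𝒞 S x} e) :
    IsLeast {x | IsActive 𝒞 (S ∆ {e}) x} e := by
  refine ⟨(isActive_symmDiff_singleton_iff le_rfl).2 h.1, fun x hx ↦ ?_⟩
  rcases le_total e x with hex | hxe
  · exact hex
  · exact h.2 ((isActive_symmDiff_singleton_iff hxe).1 hx)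

theorem symmDiff_singleton_mem_iff_of_isActive {𝒮 : Set (Finset α)}
    (h𝒮 : ∀ S e, IsActive 𝒞 S e → e ∉ S → (insert e S ∈ 𝒮 ↔ S ∈ 𝒮)) (h : IsActive 𝒞 S e) :
    S ∆ {e} ∈ 𝒮 ↔ S ∈ 𝒮 := by
  by_cases he : e ∈ S
  · have hact := (isActive_symmDiff_singleton_iff le_rfl).2 h
    rw [symmDiff_singleton_of_mem he] at hact ⊢
    simpa only [insert_erase he] using (h𝒮 _ e hact (notMem_erase e S)).symm
  · rw [symmDiff_singleton_of_notMem he]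
    exact h𝒮 S e h he

theorem sum_neg_one_pow_card_filter_isActive_eq_zero [WellFoundedLT α] {𝒮 : Finset (Finset α)}
    [DecidablePred fun S ↦ ∃ e, IsActive 𝒞 S e]
    (h𝒮 : ∀ S e, IsActive 𝒞 S e → e ∉ S → (insert e S ∈ 𝒮 ↔ S ∈ 𝒮)) :
    ∑ S ∈ 𝒮 with ∃ e, IsActive 𝒞 S e, (-1 : ℤ) ^ #S = 0 := by
  have exists_least : ∀ S ∈ ({S ∈ 𝒮 | ∃ e, IsActive 𝒞 S e} : Finset (Finset α)),
      ∃ e, IsLeast {x | IsActive 𝒞 S x} e := fun S hS ↦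
    have ⟨e, he, hmin⟩ := wellFounded_lt.has_min {x | IsActive 𝒞 S x} (mem_filter.1 hS).2
    ⟨e, he, fun x hx ↦ not_lt.1 (hmin x hx)⟩
  choose m hm using exists_least
  refine sum_involution (fun S hS ↦ S ∆ {m S hS})
    (fun S hS ↦ neg_one_pow_card_add_symmDiff_singleton S _)
    (fun S hS _ ↦ by simp) (fun S hS ↦ ?_) (fun S hS ↦ ?_)
  · exact mem_filter.2 ⟨(symmDiff_singleton_mem_iff_of_isActive (𝒮 := 𝒮) h𝒮 (hm S hS).1).2
      (mem_filter.1 hS).1, m S hS, (isLeast_isActive_symmDiff_singleton (hm S hS)).1⟩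
  · rw [(hm _ _).unique (isLeast_isActive_symmDiff_singleton (hm S hS)),
      symmDiff_symmDiff_cancel_right]

end Active

section Reach

variable {V E : Type*} {head tail : E → V} {ok ok' : E → Prop} {u v w : V} {e : E}

theorem Reach.refl (v : V) : Reach head tail ok v v :=
  Relation.EqvGen.refl v

theorem Reach.symm (h : Reach head tail ok u v) : Reach head tail ok v u :=
  Relation.EqvGen.symm _ _ h

theorem Reach.trans (huv : Reach head tail ok u v) (hvw : Reach head tail ok v w) :
    Reach head tail ok u w :=
  Relation.EqvGen.trans _ _ _ huv hvw

theorem reach_head_tail (he : ok e) : Reach head tail ok (head e) (tail e) :=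
  Relation.EqvGen.rel _ _ ⟨e, he, Or.inl ⟨rfl, rfl⟩⟩

/-- The vertex set `X` is a union of connected components of the spanning subgraph with edges `ok`,
expressed by the absence of edges between `X` and its complement. -/
def IsSaturated (head tail : E → V) (ok : E → Prop) (X : Set V) : Prop :=
  ∀ e, ok e → (head e ∈ X ↔ tail e ∈ X)

theorem IsSaturated.mem_iff_mem {X : Set V} (hX : IsSaturated head tail ok X)
    (h : Reach head tail ok u v) : u ∈ X ↔ v ∈ X := by
  induction h with
  | rel x y hxy =>
    obtain ⟨e, he, ⟨rfl, rfl⟩ | ⟨rfl, rfl⟩⟩ := hxy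
    · exact hX e he
    · exact (hX e he).symm
  | refl x => exact Iff.rfl
  | symm x y _ ih => exact ih.symm
  | trans x y z _ _ ihxy ihyz => exact ihxy.trans ihyz

theorem isSaturated_setOf_reach (v : V) :
    IsSaturated head tail ok {u | Reach head tail ok u v} := fun _ he ↦
  ⟨(reach_head_tail he).symm.trans, (reach_head_tail he).trans⟩

theorem Reach.of_forall_edge (hok : ∀ e, ok e → Reach head tail ok' (head e) (tail e))
    (h : Reach head tail ok u v) : Reach head tail ok' u v := by
  have hsat : IsSaturated head tail ok {u | Reach head tail ok' u v} := fun e he ↦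
    ⟨(hok e he).symm.trans, (hok e he).trans⟩
  exact (hsat.mem_iff_mem h).2 (Reach.refl v)

theorem Reach.mono (hok : ∀ e, ok e → ok' e) (h : Reach head tail ok u v) :
    Reach head tail ok' u v :=
  h.of_forall_edge fun e he ↦ reach_head_tail (hok e he)

theorem reach_insert_edge_iff :
    Reach head tail (fun x ↦ x = e ∨ ok x) u v ↔ Reach head tail ok u v ∨
      (Reach head tail ok u (head e) ∧ Reach head tail ok (tail e) v) ∨
      (Reach head tail ok u (tail e) ∧ Reach head tail ok (head e) v) := by
  have reach_of_reach {x y : V} : Reach head tail ok x y →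
      Reach head tail (fun x ↦ x = e ∨ ok x) x y := Reach.mono fun _ ↦ Or.inr
  have reach_ends : Reach head tail (fun x ↦ x = e ∨ ok x) (head e) (tail e) :=
    reach_head_tail (Or.inl rfl)
  constructor
  · intro h
    have hsat : IsSaturated head tail (fun x ↦ x = e ∨ ok x)
        {u | Reach head tail ok u v ∨
          (Reach head tail ok u (head e) ∧ Reach head tail ok (tail e) v) ∨
          (Reach head tail ok u (tail e) ∧ Reach head tail ok (head e) v)} := by
      rintro x (rfl | hx)
      · grind [Reach.refl]
      · have reach_congr (w : V) :
            Reach head tail ok (head x) w ↔ Reach head tail ok (tail x) w :=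
          isSaturated_setOf_reach w x hx
        simp only [Set.mem_ofPred_eq, reach_congr]
    exact (hsat.mem_iff_mem h).2 (Or.inl (Reach.refl v))
  · rintro (h | ⟨hu, hv⟩ | ⟨hu, hv⟩)
    · exact reach_of_reach h
    · exact (reach_of_reach hu).trans (reach_ends.trans (reach_of_reach hv))
    · exact (reach_of_reach hu).trans (reach_ends.symm.trans (reach_of_reach hv))

end Reach

section Components

variable {V E : Type*} {head tail : E → V} {ok ok' : E → Prop} {e : E} {F S : Finset E}

theorem ncomp_congr (h : ∀ u v, Reach head tail ok u v ↔ Reach head tail ok' u v) :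
    ncomp head tail ok = ncomp head tail ok' :=
  congrArg (fun s : Setoid V ↦ Nat.card (Quotient s)) (Setoid.ext h)

theorem ncomp_eq_ncomp_insert_edge_add_one [Finite V]
    (he : ¬ Reach head tail ok (head e) (tail e)) :
    ncomp head tail ok = ncomp head tail (fun x ↦ x = e ∨ ok x) + 1 := by
  let s := Relation.EqvGen.setoid (edgeRel head tail ok)
  let s' := Relation.EqvGen.setoid (edgeRel head tail fun x ↦ x = e ∨ ok x)
  let t : Quotient s := ⟦tail e⟧
  have coarsen {u v : V} (h : Reach head tail ok u v) :
      Reach head tail (fun x ↦ x = e ∨ ok x) u v := h.mono fun _ ↦ Or.inr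
  let f : Quotient s → Quotient s' := Quotient.map' id fun _ _ ↦ coarsen
  have hf : Function.Bijective fun q : {q // q ≠ t} ↦ f q := by
    constructor
    · rintro ⟨⟨u⟩, hu⟩ ⟨⟨v⟩, hv⟩ huv
      have hu : ¬ Reach head tail ok u (tail e) := fun h ↦ hu (Quotient.sound h)
      have hv : ¬ Reach head tail ok v (tail e) := fun h ↦ hv (Quotient.sound h)
      have huv : Reach head tail (fun x ↦ x = e ∨ ok x) u v := Quotient.exact huv
      refine Subtype.ext (Quotient.sound ?_)
      rcases reach_insert_edge_iff.1 huv with h | ⟨-, h⟩ | ⟨h, -⟩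
      exacts [h, (hv h.symm).elim, (hu h).elim]
    · rintro ⟨v⟩
      by_cases hv : Reach head tail ok v (tail e)
      · refine ⟨⟨⟦head e⟧, fun h ↦ he (Quotient.exact h)⟩, Quotient.sound ?_⟩
        exact (reach_head_tail (ok := fun x ↦ x = e ∨ ok x) (Or.inl rfl)).trans (coarsen hv.symm)
      · exact ⟨⟨⟦v⟧, fun h ↦ hv (Quotient.exact h)⟩, rfl⟩
  calc
    Nat.card (Quotient s) = Nat.card (Option {q // q ≠ t}) :=
      (Nat.card_congr (Equiv.optionSubtypeNe t)).symm
    _ = Nat.card (Quotient s') + 1 := by rw [Finite.card_option, Nat.card_eq_of_bijective _ hf]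

theorem IsBond.not_reach (hF : IsBond head tail F) (he : e ∈ F) :
    ¬ Reach head tail (fun x ↦ x ∉ F) (head e) (tail e) := by
  intro hreach
  refine hF.2.1 ((ncomp_congr fun u v ↦ ⟨Reach.mono ?_, Reach.of_forall_edge ?_⟩).trans
    (hF.2.2 (F.erase e) (erase_ssubset he)))
  · exact fun x hx hx' ↦ hx (mem_of_mem_erase hx')
  · intro x hx
    rcases eq_or_ne x e with rfl | hxe
    · exact hreach
    · exact reach_head_tail fun hxF ↦ hx (mem_erase.2 ⟨hxe, hxF⟩)

theorem exists_isBond_subset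
    (hS : ncomp head tail (fun x ↦ x ∉ S) ≠ ncomp head tail (fun _ ↦ True)) :
    ∃ F ⊆ S, IsBond head tail F := by
  obtain ⟨F, hFS, hF⟩ := exists_minimal_le_of_wellFoundedLT
    (fun F : Finset E ↦ ncomp head tail (fun x ↦ x ∉ F) ≠ ncomp head tail (fun _ ↦ True)) S hS
  refine ⟨F, hFS, nonempty_iff_ne_empty.2 ?_, hF.prop, fun F' hF' ↦ ?_⟩
  · rintro rfl
    exact hF.prop (by simp only [notMem_empty, not_false_eq_true])
  · exact not_not.1 (hF.not_prop_of_lt hF')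

theorem notMem_eq_eq_or_notMem_insert (he : e ∉ S) :
    (fun x ↦ x ∉ S) = fun x ↦ x = e ∨ x ∉ insert e S := by
  grind

theorem IsBond.ncomp_insert [Finite V] (hF : IsBond head tail F) (he : e ∈ F)
    (hFS : F.erase e ⊆ S) (heS : e ∉ S) :
    ncomp head tail (fun x ↦ x ∉ insert e S) = ncomp head tail (fun x ↦ x ∉ S) + 1 := by
  rw [notMem_eq_eq_or_notMem_insert heS]
  refine ncomp_eq_ncomp_insert_edge_add_one fun h ↦ hF.not_reach he (h.mono fun x hx hxF ↦ hx ?_)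
  exact subset_insert_iff.2 hFS hxF

end Components

section Compatible

variable {V E A : Type*} [Fintype V] [AddCommGroup A] {head tail : E → V} {ok ok' : E → Prop}
  {b : V → A} {e : E} {F S : Finset E}

theorem compatible_iff_forall_isSaturated :
    Compatible head tail ok b ↔
      ∀ X : Set V, IsSaturated head tail ok X → ∑ u, X.indicator b u = 0 := by
  refine ⟨fun hb X hX ↦ ?_, fun hb v ↦ hb _ (isSaturated_setOf_reach v)⟩
  rw [← sum_fiberwise univ (Quotient.mk (Relation.EqvGen.setoid (edgeRel head tail ok)))]
  refine sum_eq_zero fun q _ ↦ ?_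
  obtain ⟨v, rfl⟩ := q.exists_rep
  have mem_fiber {u : V} : Quotient.mk (Relation.EqvGen.setoid (edgeRel head tail ok)) u = ⟦v⟧ ↔
      Reach head tail ok u v := Quotient.eq
  simp only [mem_fiber]
  by_cases hv : v ∈ X
  · rw [← hb v, ← sum_filter]
    refine sum_congr rfl fun u hu ↦ Set.indicator_of_mem ?_ b
    exact (hX.mem_iff_mem (mem_filter.1 hu).2).2 hv
  · refine sum_eq_zero fun u hu ↦ Set.indicator_of_notMem ?_ b
    exact fun huX ↦ hv ((hX.mem_iff_mem (mem_filter.1 hu).2).1 huX)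

theorem Compatible.mono (hok : ∀ e, ok e → ok' e) (hb : Compatible head tail ok b) :
    Compatible head tail ok' b :=
  compatible_iff_forall_isSaturated.2 fun X hX ↦
    compatible_iff_forall_isSaturated.1 hb X fun e he ↦ hX e (hok e he)

theorem Compatible.of_insert_edge (hb : Compatible head tail (fun x ↦ x = e ∨ ok x) b)
    (hb' : Compatible head tail ok' b) (hok : ∀ x, ok x → ok' x)
    (he : ¬ Reach head tail ok' (head e) (tail e)) : Compatible head tail ok b := by
  intro v
  let P : Set V := {u | Reach head tail ok u v}
  let X : Set V := {u | Reach head tail ok' u v}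
  have hP : IsSaturated head tail ok P := isSaturated_setOf_reach v
  have hX : IsSaturated head tail ok' X := isSaturated_setOf_reach v
  have hPX : P ⊆ X := fun u hu ↦ Reach.mono hok hu
  have ends_notMem : ¬ (head e ∈ X ∧ tail e ∈ X) := fun h ↦ he (h.1.trans h.2.symm)
  change ∑ u, P.indicator b u = 0
  rw [compatible_iff_forall_isSaturated] at hb hb'
  by_cases hends : head e ∈ P ∨ tail e ∈ P
  · -- One end of `e` lies in `P` and the other one outside `X`, so `e` does not meet `X \ P`.
    have hdiff : IsSaturated head tail (fun x ↦ x = e ∨ ok x) (X \ P) := by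
      rintro x (rfl | hx)
      · have head_mem := @hPX (head x)
        have tail_mem := @hPX (tail x)
        simp only [Set.mem_sdiff]
        tauto
      · exact and_congr (hX x (hok x hx)) (not_congr (hP x hx))
    calc
      ∑ u, P.indicator b u = ∑ u, X.indicator b u - ∑ u, (X \ P).indicator b u := by
        rw [← sum_sub_distrib, Set.indicator_sdiff hPX]
        simp
      _ = 0 := by rw [hb' X hX, hb _ hdiff, sub_zero]
  · refine hb P ?_
    rintro x (rfl | hx)
    · tauto
    · exact hP x hx

theorem IsCBond.compatible_insert_iff (hF : IsCBond head tail b F) (he : e ∈ F)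
    (hFS : F.erase e ⊆ S) (heS : e ∉ S) :
    Compatible head tail (fun x ↦ x ∉ insert e S) b ↔ Compatible head tail (fun x ↦ x ∉ S) b := by
  refine ⟨Compatible.mono fun x hx hxS ↦ hx (mem_insert_of_mem hxS), fun hS ↦ ?_⟩
  rw [notMem_eq_eq_or_notMem_insert heS] at hS
  refine hS.of_insert_edge hF.2 (fun x hx hxF ↦ hx ?_) (hF.1.not_reach he)
  exact subset_insert_iff.2 hFS hxF

end Compatible

section Coefficients

variable {V E A : Type*} [Fintype V] [AddCommGroup A] {head tail : E → V} {b : V → A}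
  {S : Finset E} {i : ℕ}

theorem exists_isCBrokenBond_subset_iff [lo : LinearOrder E] :
    (∃ B, IsCBrokenBond head tail lo b B ∧ B ⊆ S) ↔
      ∃ e, IsActive {F | IsCBond head tail b F} S e := by
  constructor
  · rintro ⟨_, ⟨F, hF, hne, rfl⟩, hS⟩
    exact ⟨F.max' hne, F, hF, F.isGreatest_max' hne, hS⟩
  · rintro ⟨e, F, hF, he, hS⟩
    have hmax : F.max' ⟨e, he.1⟩ = e := (F.isGreatest_max' _).unique he
    exact ⟨F.erase e, ⟨F, hF, ⟨e, he.1⟩, by rw [hmax]⟩, hS⟩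

theorem ncomp_eq_of_not_exists_isActive [LinearOrder E]
    (hb : Compatible head tail (fun x ↦ x ∉ S) b)
    (hS : ¬ ∃ e, IsActive {F | IsCBond head tail b F} S e) :
    ncomp head tail (fun x ↦ x ∉ S) = ncomp head tail (fun _ ↦ True) := by
  by_contra hne
  obtain ⟨F, hFS, hF⟩ := exists_isBond_subset hne
  have hFb : IsCBond head tail b F := ⟨hF, hb.mono fun x hx hxF ↦ hx (hFS hxF)⟩
  exact hS ⟨F.max' hF.1, F, hFb, F.isGreatest_max' hF.1, (erase_subset _ F).trans hFS⟩

variable [Fintype E]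

/-- The edge sets `S` of rank `i` in the bond matroid such that `G - S` is `b`-compatible. The rank
`|S| + c(G) - c(G - S)` is prescribed without subtraction. -/
noncomputable def compatibleSetsOfRank (head tail : E → V) (b : V → A) (i : ℕ) :
    Finset (Finset E) :=
  {S | Compatible head tail (fun x ↦ x ∉ S) b ∧
    #S + ncomp head tail (fun _ ↦ True) = i + ncomp head tail (fun x ↦ x ∉ S)}

theorem mem_compatibleSetsOfRank :
    S ∈ compatibleSetsOfRank head tail b i ↔ Compatible head tail (fun x ↦ x ∉ S) b ∧
      #S + ncomp head tail (fun _ ↦ True) = i + ncomp head tail (fun x ↦ x ∉ S) :=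
  mem_filter_univ S

theorem insert_mem_compatibleSetsOfRank_iff [LinearOrder E] {e : E}
    (h : IsActive {F | IsCBond head tail b F} S e) (heS : e ∉ S) :
    insert e S ∈ compatibleSetsOfRank head tail b i ↔ S ∈ compatibleSetsOfRank head tail b i := by
  obtain ⟨F, hF, he, hFS⟩ := h
  rw [mem_compatibleSetsOfRank, mem_compatibleSetsOfRank, hF.compatible_insert_iff he.1 hFS heS,
    hF.1.ncomp_insert he.1 hFS heS, card_insert_of_notMem heS]
  exact and_congr_right fun _ ↦ by lia

theorem mem_compatibleSetsOfRank_and_not_isActive_iff [lo : LinearOrder E] :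
    (S ∈ compatibleSetsOfRank head tail b i ∧ ¬ ∃ e, IsActive {F | IsCBond head tail b F} S e) ↔
      #S = i ∧ Compatible head tail (fun x ↦ x ∉ S) b ∧
        ∀ B, IsCBrokenBond head tail lo b B → ¬ B ⊆ S := by
  have no_broken_iff : (∀ B, IsCBrokenBond head tail lo b B → ¬ B ⊆ S) ↔
      ¬ ∃ e, IsActive {F | IsCBond head tail b F} S e := by
    rw [← exists_isCBrokenBond_subset_iff]
    push Not
    rfl
  rw [no_broken_iff, mem_compatibleSetsOfRank, ← and_assoc]
  refine and_congr_left fun hS ↦ ?_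
  rw [and_comm]
  refine and_congr_left fun hb ↦ ?_
  rw [ncomp_eq_of_not_exists_isActive hb hS, Nat.add_right_cancel_iff]

theorem sum_compatibleSetsOfRank_neg_one_pow_card (lo : LinearOrder E) :
    ∑ S ∈ compatibleSetsOfRank head tail b i, (-1 : ℤ) ^ #S =
      (-1) ^ i * aCoeff head tail lo b i := by
  let good : Finset (Finset E) :=
    {S ∈ compatibleSetsOfRank head tail b i | ¬ ∃ e, IsActive {F | IsCBond head tail b F} S e}
  have mem_good {S : Finset E} : S ∈ good ↔ #S = i ∧ Compatible head tail (fun x ↦ x ∉ S) b ∧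
      ∀ B, IsCBrokenBond head tail lo b B → ¬ B ⊆ S :=
    mem_filter.trans mem_compatibleSetsOfRank_and_not_isActive_iff
  have active_cancel : ∑ S ∈ compatibleSetsOfRank head tail b i with
      ∃ e, IsActive {F | IsCBond head tail b F} S e, (-1 : ℤ) ^ #S = 0 :=
    sum_neg_one_pow_card_filter_isActive_eq_zero fun _ _ ↦ insert_mem_compatibleSetsOfRank_iff
  calc
    ∑ S ∈ compatibleSetsOfRank head tail b i, (-1 : ℤ) ^ #S
    _ = ∑ S ∈ good, (-1) ^ #S := by
      rw [← sum_filter_add_sum_filter_not _ fun S ↦ ∃ e, IsActive {F | IsCBond head tail b F} S e,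
        active_cancel, zero_add]
    _ = ∑ _S ∈ good, (-1) ^ i := sum_congr rfl fun S hS ↦ by rw [(mem_good.1 hS).1]
    _ = (-1) ^ i * aCoeff head tail lo b i := by
      rw [sum_const, nsmul_eq_mul, mul_comm, aCoeff, Nat.subtype_card good fun _ ↦ mem_good]

end Coefficients

/-- the coefficients `a_i(G,b)` are independent of the total edge order. -/
theorem stmt12 {V E A : Type*} [Fintype V] [Fintype E] [AddCommGroup A]
    (head tail : E → V) (lo₁ lo₂ : LinearOrder E) (b : V → A)
    (hb : Compatible head tail (fun _ => True) b) (i : ℕ) :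
    aCoeff head tail lo₁ b i = aCoeff head tail lo₂ b i := by
  have hsum : (-1 : ℤ) ^ i * aCoeff head tail lo₁ b i = (-1) ^ i * aCoeff head tail lo₂ b i :=
    (sum_compatibleSetsOfRank_neg_one_pow_card lo₁).symm.trans
      (sum_compatibleSetsOfRank_neg_one_pow_card lo₂)
  exact_mod_cast mul_left_cancel₀ (pow_ne_zero i (by decide)) hsum
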